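/- Fix an integer d ≥ 1 and let B = [−1/2, 1/2]^d ⊂ ℝ^d. Let L ∈ GL(d,ℝ) with operator norm ‖L‖ < 1, set J = |det L|, let H ≥ 1 be an integer, and let v₀, v₁, …, v_H ∈ B be such that each affine map L_j(z) = L·z + v_j (0 ≤ j ≤ H) sends B into the interior of B; for a word j̲ = (j₁, …, j_n) ∈ {1,…,H}^n write L_{j̲} = L_{j_n} ∘ ⋯ ∘ L_{j₁}. Assume there exists β > 1 such that for every n ≥ 1 and every x ∈ ℝ^d, the number of words j̲ ∈ {1,…,H}^n with x ∈ L_{j̲}(B) is at most β^n. Then for all integers n ≥ 1 and 1 ≤ m ≤ n, the set A of points x ∈ B that belong to at least (1/2)·J^{n+1}·H^n of the sets L₀(L_{j̲}(B)), j̲ ∈ {1,…,H}^n, is compact, has Lebesgue measure at least (1/2)·J^{n+1}·(H/β)^n, and moreover every x ∈ A belongs to at least (1/2)·J^{n+1}·H^n·β^{m−n} of the sets L₀(L_{j̲}(B)) whose index words j̲ have pairwise distinct final segments (j_{n−m+1}, …, j_n). -/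

import Mathlib

/-!
All images `C w = L₀(L_w(B))` are translates of `L^{n+1}(B)` contained in `B`, so each has volume
`J^{n+1}`, and the multiplicity function `N(x) = #{w | x ∈ C w}` has integral `J^{n+1} H^n = 2t`,
where `t` is the depth threshold. By injectivity of `L₀` and the counting hypothesis `N ≤ β^n`.
Splitting the integral over `B` into the deep set `A = {N ≥ t}` and its complement gives
`2t ≤ β^n vol A + t`, which is the volume bound. `A` is compact since it is the intersection of `B`
with a finite union of finite intersections of the closed sets `C w`.

For the last part, words through `x` with a common final segment `s` of length `m` have prefixes
`p` of length `n - m` with `L₀ L_s L_p z = x`; as `L₀ L_s` is injective, all the sets `L_p(B)`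
contain one and the same point, so there are at most `β^{n-m}` such words. Choosing one
representative for each occurring final segment gives the required family.
-/

open MeasureTheory

/-- The closed cube `[−1/2,1/2]^d` in `ℝ^d`. -/
def unitCube (d : ℕ) : Set (EuclideanSpace ℝ (Fin d)) :=
  {x | ∀ i, |x i| ≤ 1 / 2}

/-- `wordMap L v n w` is the composition `L_{w n} ∘ ⋯ ∘ L_{w 1}` of the affine contractions
`L_j z = L z + v j` along the word `w = (w 1, …, w n)` (first letter applied first). -/
noncomputable def wordMap {d H : ℕ}
    (L : EuclideanSpace ℝ (Fin d) →L[ℝ] EuclideanSpace ℝ (Fin d))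
    (v : Fin H → EuclideanSpace ℝ (Fin d)) :
    (n : ℕ) → (Fin n → Fin H) → EuclideanSpace ℝ (Fin d) → EuclideanSpace ℝ (Fin d)
  | 0, _, z => z
  | n + 1, w, z => L (wordMap L v n (fun i => w i.castSucc) z) + v (w (Fin.last n))

lemma unitCube_eq_preimage (d : ℕ) :
    unitCube d = (WithLp.ofLp : EuclideanSpace ℝ (Fin d) → (Fin d → ℝ)) ⁻¹'
      Set.Icc (fun _ => -(1 / 2 : ℝ)) (fun _ => (1 / 2 : ℝ)) := by
  ext x
  simp only [unitCube, Set.mem_ofPred_eq, Set.mem_preimage, Set.mem_Icc, Pi.le_def, abs_le,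
    forall_and]

lemma volume_unitCube (d : ℕ) : volume (unitCube d) = 1 := by
  rw [unitCube_eq_preimage,
    (PiLp.volume_preserving_ofLp (Fin d)).measure_preimage
      measurableSet_Icc.nullMeasurableSet, Real.volume_Icc_pi]
  norm_num

lemma isCompact_unitCube (d : ℕ) : IsCompact (unitCube d) := by
  rw [unitCube_eq_preimage]
  exact (PiLp.homeomorph 2 (fun _ : Fin d => ℝ)).isCompact_preimage.2 isCompact_Icc

section wordMapLemmas

variable {d H : ℕ} (L : EuclideanSpace ℝ (Fin d) →L[ℝ] EuclideanSpace ℝ (Fin d))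
  (v : Fin H → EuclideanSpace ℝ (Fin d))

lemma continuous_wordMap (n : ℕ) (w : Fin n → Fin H) : Continuous (wordMap L v n w) := by
  induction n with
  | zero => exact continuous_id
  | succ n ih => exact (L.continuous.comp (ih _)).add continuous_const

lemma injective_wordMap (hL : Function.Injective L) (n : ℕ) (w : Fin n → Fin H) :
    Function.Injective (wordMap L v n w) := by
  induction n with
  | zero => exact fun _ _ h => h
  | succ n ih => exact fun a b h => ih _ (hL (add_right_cancel h))

/-- A word map factors through its prefix: the final segment of length `j` is applied last. -/
lemma wordMap_add (k j : ℕ) (w : Fin (k + j) → Fin H) (z : EuclideanSpace ℝ (Fin d)) :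
    wordMap L v (k + j) w z =
      wordMap L v j (fun i => w (Fin.natAdd k i)) (wordMap L v k (fun i => w (Fin.castAdd j i)) z) := by
  induction j with
  | zero => rfl
  | succ j ih =>
    change L (wordMap L v (k + j) (fun i => w i.castSucc) z) + _ = _
    rw [ih]
    rfl

lemma volume_affine_image (c : EuclideanSpace ℝ (Fin d)) (s : Set (EuclideanSpace ℝ (Fin d))) :
    volume ((fun z => L z + c) '' s) =
      ENNReal.ofReal |LinearMap.det L.toLinearMap| * volume s := by
  have : (fun z => L z + c) '' s = (fun z => z + c) '' (L '' s) := by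
    rw [Set.image_image]
  rw [this, Set.image_add_right, measure_preimage_add_right]
  exact Measure.addHaar_image_continuousLinearMap _ _ _

lemma volume_wordMap_image (n : ℕ) (w : Fin n → Fin H) (s : Set (EuclideanSpace ℝ (Fin d))) :
    volume (wordMap L v n w '' s) =
      ENNReal.ofReal |LinearMap.det L.toLinearMap| ^ n * volume s := by
  induction n with
  | zero =>
    have : wordMap L v 0 w = id := rfl
    simp [this]
  | succ n ih =>
    have : wordMap L v (n + 1) w '' s =
        (fun z => L z + v (w (Fin.last n))) '' (wordMap L v n (fun i => w i.castSucc) '' s) := by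
      rw [Set.image_image]
      rfl
    rw [this, volume_affine_image, ih, pow_succ', mul_assoc]

lemma wordMap_mem (hmap : ∀ j : Fin H, ∀ z ∈ unitCube d, L z + v j ∈ interior (unitCube d))
    (n : ℕ) (w : Fin n → Fin H) {z : EuclideanSpace ℝ (Fin d)} (hz : z ∈ unitCube d) :
    wordMap L v n w z ∈ unitCube d := by
  induction n with
  | zero => exact hz
  | succ n ih => exact interior_subset (hmap _ _ (ih _))

end wordMapLemmas

/-- A set of points covered at least `t` times by a finite family of closed sets is closed. -/
lemma isClosed_deep {X ι : Type*} [TopologicalSpace X] [Fintype ι] (C : ι → Set X)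
    (hC : ∀ i, IsClosed (C i)) (t : ℝ) :
    IsClosed {x | t ≤ (Nat.card {i // x ∈ C i} : ℝ)} := by
  classical
  have : {x | t ≤ (Nat.card {i // x ∈ C i} : ℝ)} =
      ⋃ S ∈ {S : Finset ι | t ≤ (S.card : ℝ)}, ⋂ i ∈ S, C i := by
    ext x
    simp only [Set.mem_ofPred_eq, Set.mem_iUnion, Set.mem_iInter, exists_prop]
    rw [Nat.card_eq_fintype_card, Fintype.card_subtype]
    constructor
    · intro h
      exact ⟨_, h, fun i hi => (Finset.mem_filter.1 hi).2⟩
    · rintro ⟨S, hS, hx⟩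
      refine hS.trans ?_
      exact_mod_cast Finset.card_le_card fun i hi => Finset.mem_filter.2 ⟨Finset.mem_univ _, hx i hi⟩
  rw [this]
  exact (Set.toFinite _).isClosed_biUnion fun S _ => isClosed_biInter fun i _ => hC i

/-- Pigeonhole in measure: if a finite family of measurable subsets of a set `B` of measure one
has total measure `2t` and multiplicity at most `M`, then the set of points of multiplicity at
least `t` has measure at least `t / M`. -/
lemma volume_deep {X ι : Type*} [MeasurableSpace X] [Fintype ι] (μ : Measure X) (B : Set X)
    (hB : μ B = 1) (C : ι → Set X) (hC : ∀ i, MeasurableSet (C i)) (hCB : ∀ i, C i ⊆ B)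
    (t M : ℝ) (ht : 0 ≤ t) (hM : 0 < M) (hsum : ∑ i, μ (C i) = ENNReal.ofReal (2 * t))
    (hmult : ∀ x, (Nat.card {i // x ∈ C i} : ℝ) ≤ M)
    (hA : MeasurableSet {x | x ∈ B ∧ t ≤ (Nat.card {i // x ∈ C i} : ℝ)}) :
    ENNReal.ofReal (t / M) ≤ μ {x | x ∈ B ∧ t ≤ (Nat.card {i // x ∈ C i} : ℝ)} := by
  classical
  set A := {x | x ∈ B ∧ t ≤ (Nat.card {i // x ∈ C i} : ℝ)} with hAdef
  have hN : ∀ x, ∑ i, (C i).indicator (1 : X → ENNReal) x =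
      ENNReal.ofReal (Nat.card {i // x ∈ C i} : ℝ) := by
    intro x
    rw [ENNReal.ofReal_natCast, Nat.card_eq_fintype_card, Fintype.card_subtype]
    simp [Set.indicator_apply]
  have hint : ∫⁻ x in B, ∑ i, (C i).indicator (1 : X → ENNReal) x ∂μ = ENNReal.ofReal (2 * t) := by
    rw [lintegral_finsetSum _ fun i _ => measurable_one.indicator (hC i), ← hsum]
    refine Finset.sum_congr rfl fun i _ => ?_
    rw [lintegral_indicator_one (hC i), Measure.restrict_apply (hC i),
      Set.inter_eq_left.2 (hCB i)]
  have hle : ENNReal.ofReal (2 * t) ≤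
      ENNReal.ofReal M * μ A + ENNReal.ofReal t := by
    rw [← hint, ← lintegral_inter_add_sdiff _ B hA]
    gcongr
    · calc _ ≤ ∫⁻ x in B ∩ A, ENNReal.ofReal M ∂μ := by
            refine lintegral_mono fun x => ?_
            rw [hN]
            exact ENNReal.ofReal_le_ofReal (hmult x)
        _ ≤ _ := by
            rw [setLIntegral_const]
            gcongr
            exact Set.inter_subset_right
    · calc _ ≤ ∫⁻ x in B \ A, ENNReal.ofReal t ∂μ := by
            refine setLIntegral_mono measurable_const fun x hx => ?_
            rw [hN]
            exact ENNReal.ofReal_le_ofReal (not_le.1 fun h => hx.2 ⟨hx.1, h⟩).le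
        _ ≤ _ := by
            rw [setLIntegral_const]
            calc _ ≤ ENNReal.ofReal t * μ B := by
                  gcongr
                  exact Set.sdiff_subset
              _ = _ := by rw [hB, mul_one]
  have h2 : ENNReal.ofReal t ≤ ENNReal.ofReal M * μ A := by
    rw [two_mul, ENNReal.ofReal_add ht ht] at hle
    exact (ENNReal.add_le_add_iff_right ENNReal.ofReal_ne_top).1 hle
  rw [ENNReal.ofReal_div_of_pos hM]
  exact ENNReal.div_le_of_le_mul' h2

/-- Finite pigeonhole: if at most `M` elements of `W` share any given value of `f`, then `W`
contains a set `S` on which `f` is injective and with `#W ≤ M * #S`. -/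
lemma exists_transversal {α γ : Type*} [DecidableEq γ] (W : Finset α) (f : α → γ)
    (M : ℝ) (hM : ∀ s, ((W.filter fun w => f w = s).card : ℝ) ≤ M) :
    ∃ S ⊆ W, (W.card : ℝ) ≤ M * S.card ∧ Set.InjOn f S := by
  classical
  have hmem : ∀ s : {s // s ∈ W.image f}, ∃ w ∈ W, f w = s := fun s => Finset.mem_image.1 s.2
  choose g hgW hg using hmem
  refine ⟨Finset.univ.image g, ?_, ?_, ?_⟩
  · intro w hw
    obtain ⟨s, -, rfl⟩ := Finset.mem_image.1 hw
    exact hgW s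
  · have hginj : Function.Injective g := fun a b h => Subtype.ext (by rw [← hg a, ← hg b, h])
    rw [Finset.card_image_of_injective _ hginj, Finset.card_univ, Fintype.card_coe,
      Finset.card_eq_sum_card_image f W]
    push_cast
    calc _ ≤ ∑ s ∈ W.image f, M := Finset.sum_le_sum fun s _ => hM s
      _ = _ := by rw [Finset.sum_const, nsmul_eq_mul, mul_comm]
  · intro a ha b hb h
    obtain ⟨s, -, rfl⟩ := Finset.mem_image.1 (Finset.mem_coe.1 ha)
    obtain ⟨r, -, rfl⟩ := Finset.mem_image.1 (Finset.mem_coe.1 hb)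
    rw [hg, hg] at h
    rw [Subtype.ext h]

/-- **Pigeonhole claim on deep points of the image family.**  The set `A` of points of the
cube lying in at least `½·J^{n+1}·H^n` of the images `L₀(L_{j̲}(B))` is compact, of Lebesgue
measure at least `½·J^{n+1}·(H/β)^n`, and each of its points lies in at least
`½·J^{n+1}·H^n·β^{m−n}` of these images indexed by words with pairwise distinct final
segments of length `m`. -/
theorem ifs_deep_points_pigeonhole
    (d : ℕ) (hd : 1 ≤ d)
    (L : EuclideanSpace ℝ (Fin d) →L[ℝ] EuclideanSpace ℝ (Fin d))
    (hLbij : Function.Bijective L) (hLnorm : ‖L‖ < 1)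
    (H : ℕ) (hH : 1 ≤ H)
    (v0 : EuclideanSpace ℝ (Fin d)) (v : Fin H → EuclideanSpace ℝ (Fin d))
    (hv0 : v0 ∈ unitCube d) (hv : ∀ j, v j ∈ unitCube d)
    (hmap0 : ∀ z ∈ unitCube d, L z + v0 ∈ interior (unitCube d))
    (hmap : ∀ j : Fin H, ∀ z ∈ unitCube d, L z + v j ∈ interior (unitCube d))
    (J : ℝ) (hJ : J = |LinearMap.det L.toLinearMap|)
    (β : ℝ) (hβ : 1 < β)
    (hcount : ∀ n : ℕ, 1 ≤ n → ∀ x : EuclideanSpace ℝ (Fin d),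
      (Nat.card {w : Fin n → Fin H // x ∈ wordMap L v n w '' unitCube d} : ℝ) ≤ β ^ n)
    (n m : ℕ) (hn : 1 ≤ n) (hm1 : 1 ≤ m) (hmn : m ≤ n) :
    IsCompact {x | x ∈ unitCube d ∧
        (1 / 2 : ℝ) * J ^ (n + 1) * (H : ℝ) ^ n ≤
          (Nat.card {w : Fin n → Fin H //
            x ∈ (fun z => L (wordMap L v n w z) + v0) '' unitCube d} : ℝ)} ∧
    ENNReal.ofReal ((1 / 2 : ℝ) * J ^ (n + 1) * ((H : ℝ) / β) ^ n) ≤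
      volume {x | x ∈ unitCube d ∧
        (1 / 2 : ℝ) * J ^ (n + 1) * (H : ℝ) ^ n ≤
          (Nat.card {w : Fin n → Fin H //
            x ∈ (fun z => L (wordMap L v n w z) + v0) '' unitCube d} : ℝ)} ∧
    ∀ x ∈ {x | x ∈ unitCube d ∧
        (1 / 2 : ℝ) * J ^ (n + 1) * (H : ℝ) ^ n ≤
          (Nat.card {w : Fin n → Fin H //
            x ∈ (fun z => L (wordMap L v n w z) + v0) '' unitCube d} : ℝ)},
      ∃ S : Finset (Fin n → Fin H),
        (1 / 2 : ℝ) * J ^ (n + 1) * (H : ℝ) ^ n * β ^ ((m : ℝ) - (n : ℝ)) ≤ (S.card : ℝ) ∧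
        (∀ w1 ∈ S, ∀ w2 ∈ S, w1 ≠ w2 →
          ∃ i : Fin n, n - m ≤ (i : ℕ) ∧ w1 i ≠ w2 i) ∧
        (∀ w ∈ S, x ∈ (fun z => L (wordMap L v n w z) + v0) '' unitCube d) := by
  classical
  -- the closed images `C w`, all of volume `J ^ (n + 1)` and contained in the cube
  set C : (Fin n → Fin H) → Set (EuclideanSpace ℝ (Fin d)) :=
    fun w => (fun z => L (wordMap L v n w z) + v0) '' unitCube d with hCdef
  have hβ0 : 0 < β := by linarith
  have hJ0 : 0 ≤ J := hJ ▸ abs_nonneg _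
  have hCcomp : ∀ w, IsCompact (C w) := fun w =>
    (isCompact_unitCube d).image ((L.continuous.comp (continuous_wordMap L v n w)).add
      continuous_const)
  have hCsub : ∀ w, C w ⊆ unitCube d := by
    rintro w _ ⟨z, hz, rfl⟩
    exact interior_subset (hmap0 _ (wordMap_mem L v hmap n w hz))
  have hCvol : ∀ w, volume (C w) = ENNReal.ofReal (J ^ (n + 1)) := by
    intro w
    have : C w = (fun z => L z + v0) '' (wordMap L v n w '' unitCube d) := by
      rw [Set.image_image]
    rw [this, volume_affine_image, volume_wordMap_image, volume_unitCube, ← hJ, mul_one,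
      ENNReal.ofReal_pow hJ0, pow_succ']
  have hmult : ∀ x, (Nat.card {w // x ∈ C w} : ℝ) ≤ β ^ n := by
    intro x
    obtain ⟨y, hy⟩ := hLbij.2 (x - v0)
    refine le_trans ?_ (hcount n hn y)
    refine Nat.cast_le.2 (Nat.card_le_card_of_injective
      (Subtype.map id fun w hw => ?_) (Subtype.map_injective _ Function.injective_id))
    obtain ⟨z, hz, hzx⟩ := hw
    exact ⟨z, hz, hLbij.1 (by rw [hy, ← hzx]; simp)⟩
  have hcomp : IsCompact {x | x ∈ unitCube d ∧
      (1 / 2 : ℝ) * J ^ (n + 1) * (H : ℝ) ^ n ≤ (Nat.card {w // x ∈ C w} : ℝ)} :=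
    (isCompact_unitCube d).inter_right (isClosed_deep C (fun w => (hCcomp w).isClosed) _)
  refine ⟨hcomp, ?_, ?_⟩
  · have h := volume_deep volume (unitCube d) (volume_unitCube d) C
      (fun w => (hCcomp w).measurableSet) hCsub ((1 / 2 : ℝ) * J ^ (n + 1) * (H : ℝ) ^ n) (β ^ n)
      (by positivity) (by positivity) ?_ hmult hcomp.measurableSet
    · rwa [div_pow, ← mul_div_assoc]
    · simp only [hCvol, Finset.sum_const, Finset.card_univ, Fintype.card_fun, Fintype.card_fin,
        nsmul_eq_mul]
      rw [← ENNReal.ofReal_natCast, ← ENNReal.ofReal_mul (by positivity)]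
      congr 1
      push_cast
      ring
  · rintro x ⟨-, hx⟩
    obtain ⟨k, rfl⟩ : ∃ k, n = k + m := ⟨n - m, by omega⟩
    -- at most `β ^ k` words through `x` share a given final segment `s`
    have hM : ∀ s : Fin m → Fin H, ((Finset.filter
        (fun w : Fin (k + m) → Fin H => (fun i : Fin m => w (Fin.natAdd k i)) = s)
        (Finset.univ.filter fun w => x ∈ C w)).card : ℝ) ≤ β ^ k := by
      intro s
      rcases Nat.eq_zero_or_pos k with rfl | hk
      -- with empty prefixes the final segment is the whole word
      · rw [pow_zero]
        refine Nat.cast_le_one.2 (Finset.card_le_one.2 fun a ha b hb => funext fun i => ?_)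
        have h := (Finset.mem_filter.1 ha).2.trans (Finset.mem_filter.1 hb).2.symm
        have hi : i = Fin.natAdd 0 (Fin.cast (Nat.zero_add m) i) := Fin.ext (by simp)
        rw [hi]
        exact congrFun h _
      · rcases Finset.eq_empty_or_nonempty (Finset.filter
          (fun w : Fin (k + m) → Fin H => (fun i : Fin m => w (Fin.natAdd k i)) = s)
          (Finset.univ.filter fun w => x ∈ C w)) with he | ⟨w0, hw0⟩
        · rw [he]
          simp only [Finset.card_empty, Nat.cast_zero]
          positivity
        · have hmem : ∀ w ∈ Finset.filter
              (fun w : Fin (k + m) → Fin H => (fun i : Fin m => w (Fin.natAdd k i)) = s)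
              (Finset.univ.filter fun w => x ∈ C w), ∃ z ∈ unitCube d,
              L (wordMap L v m s (wordMap L v k (fun i => w (Fin.castAdd m i)) z)) + v0 = x := by
            intro w hw
            obtain ⟨hw1, hw2⟩ := Finset.mem_filter.1 hw
            obtain ⟨z, hz, hzx⟩ := (Finset.mem_filter.1 hw1).2
            refine ⟨z, hz, ?_⟩
            rw [← hzx, ← hw2]
            simp only [wordMap_add]
          obtain ⟨z0, -, hz0⟩ := hmem w0 hw0
          -- the common preimage of `x` under `L₀ ∘ L_s`
          set y := wordMap L v k (fun i => w0 (Fin.castAdd m i)) z0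
          refine le_trans ?_ (hcount k hk y)
          rw [Nat.card_eq_fintype_card, Fintype.card_subtype]
          refine Nat.cast_le.2 (Finset.card_le_card_of_injOn (fun w i => w (Fin.castAdd m i)) ?_ ?_)
          · intro w hw
            obtain ⟨z, hz, hzx⟩ := hmem w hw
            refine Finset.mem_coe.2 (Finset.mem_filter.2 ⟨Finset.mem_univ _, z, hz, ?_⟩)
            exact injective_wordMap L v hLbij.1 m s
              (hLbij.1 (add_right_cancel (hzx.trans hz0.symm)))
          · intro a ha b hb hab
            have h := (Finset.mem_filter.1 ha).2.trans (Finset.mem_filter.1 hb).2.symm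
            funext i
            exact Fin.addCases (motive := fun i => a i = b i) (fun i => congrFun hab i)
              (fun i => congrFun h i) i
    obtain ⟨S, hSW, hcard, hinj⟩ := exists_transversal
      (Finset.univ.filter fun w : Fin (k + m) → Fin H => x ∈ C w)
      (fun w (i : Fin m) => w (Fin.natAdd k i)) (β ^ k) hM
    refine ⟨S, ?_, ?_, fun w hw => (Finset.mem_filter.1 (hSW hw)).2⟩
    · rw [Nat.card_eq_fintype_card, Fintype.card_subtype] at hx
      have hexp : β ^ ((m : ℝ) - ((k + m : ℕ) : ℝ)) = (β ^ k)⁻¹ := by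
        rw [← Real.rpow_natCast β k, ← Real.rpow_neg hβ0.le]
        congr 1
        push_cast
        ring
      rw [hexp, ← div_eq_mul_inv, div_le_iff₀' (by positivity)]
      exact hx.trans hcard
    · intro w1 h1 w2 h2 hne
      by_contra! hcon
      exact hne (hinj h1 h2 (funext fun i => hcon _ (by simp)))
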